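/- Let 𝕂 = ℝ or ℂ, let m ≥ 1, let p ≥ 2m, set ρ := 2mp/(mp + p − 2m), and let C ≥ 0 be a constant such that (∑_{|α|=m} |c_α(P)|^{ρ})^{1/ρ} ≤ C‖P‖ for every continuous m-homogeneous polynomial P : ℓ_p → 𝕂. Then (∑_{j₁,…,j_m=1}^∞ |T(e_{j₁},…,e_{j_m})|^{ρ})^{1/ρ} ≤ C‖T‖ for every continuous m-linear form T : ℓ_p × ⋯ × ℓ_p → 𝕂; that is, the multilinear Hardy–Littlewood constant is at most the polynomial Hardy–Littlewood constant. -/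

import Mathlib

open scoped Classical ENNReal

/-- Continuous `m`-linear forms on `ℓ_p`. -/
abbrev MultFormLp (𝕂 : Type*) [RCLike 𝕂] (P : ℝ≥0∞) [Fact (1 ≤ P)] (m : ℕ) :=
  ContinuousMultilinearMap 𝕂 (fun _ : Fin m => lp (fun _ : ℕ => 𝕂) P) 𝕂

/-- The degree `|α|` of a multi-index. -/
def mdeg (α : ℕ →₀ ℕ) : ℕ := α.sum fun _ n => n

/-- The coefficient `c_α` of the monomial `x^α` in the `m`-homogeneous polynomial
`x ↦ T (x, …, x)` on `ℓ_p`. -/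
noncomputable def coeffLp {𝕂 : Type*} [RCLike 𝕂] {P : ℝ≥0∞} [Fact (1 ≤ P)] {m : ℕ}
    (T : MultFormLp 𝕂 P m) (α : ℕ →₀ ℕ) : 𝕂 :=
  ∑ f : Fin m → α.support,
    if ∀ j : α.support, (Finset.univ.filter fun i => f i = j).card = α j then
      T (fun i => lp.single P (f i : ℕ) (1 : 𝕂))
    else 0

/-- The norm of a (polynomial) function: the supremum of `‖P x‖` over the closed unit ball. -/
noncomputable def polyNorm {𝕂 E : Type*} [RCLike 𝕂] [NormedAddCommGroup E] (P : E → 𝕂) : ℝ :=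
  sSup ((fun x => ‖P x‖) '' Metric.closedBall 0 1)

/-!
Split the coordinates of `ℓ_p` into `m` disjoint infinite blocks, and let `T` read its `i`-th
argument only through the `i`-th block. In the polynomial obtained on the diagonal, the monomial
that takes the `f i`-th coordinate of block `i` for each `i` arises from a single ordering of its
variables, so its coefficient is exactly `T (e_{f 1}, …, e_{f m})`. Distinct `f` give distinct
monomials, and restricting to a block is a contraction, so the norm of the polynomial is at most
`‖T‖`.
-/

section LpComap

variable {ι κ 𝕜 : Type*} {E : ι → Type*} [∀ i, NormedAddCommGroup (E i)] {p : ℝ≥0∞}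

theorem memℓp_comp_embedding {x : ∀ i, E i} (hx : Memℓp x p) (φ : κ ↪ ι) :
    Memℓp (fun k => x (φ k)) p := by
  rcases p.trichotomy with rfl | rfl | hp
  · exact memℓp_zero (hx.finite_dsupport.preimage φ.injective.injOn)
  · exact memℓp_infty (hx.bddAbove.mono (Set.range_comp_subset_range φ fun i => ‖x i‖))
  · exact memℓp_gen ((hx.summable hp).comp_injective φ.injective)

theorem norm_lp_comp_embedding_le [Fact (1 ≤ p)] (φ : κ ↪ ι) (x : lp E p) :
    ‖(⟨fun k => x (φ k), memℓp_comp_embedding x.2 φ⟩ : lp (fun k => E (φ k)) p)‖ ≤ ‖x‖ := by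
  rcases p.dichotomy with rfl | hp
  · exact lp.norm_le_of_forall_le (norm_nonneg x) fun k =>
      lp.norm_apply_le_norm ENNReal.top_ne_zero x (φ k)
  · have hp_pos : 0 < p.toReal := one_pos.trans_le hp
    refine lp.norm_le_of_forall_sum_le hp_pos (norm_nonneg x) fun s => ?_
    simpa using lp.sum_rpow_le_norm_rpow hp_pos x (s.map φ)

variable [NontriviallyNormedField 𝕜] [∀ i, NormedSpace 𝕜 (E i)] [Fact (1 ≤ p)]

/-- The pullback `x ↦ x ∘ φ` of `p`-summable families along an embedding `φ` of index types, as a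
continuous linear map. It restricts a family to the block of coordinates `range φ`. -/
noncomputable def lpComap (φ : κ ↪ ι) : lp E p →L[𝕜] lp (fun k => E (φ k)) p :=
  LinearMap.mkContinuous
    { toFun := fun x => ⟨fun k => x (φ k), memℓp_comp_embedding x.2 φ⟩
      map_add' := fun _ _ => rfl
      map_smul' := fun _ _ => rfl } 1
    fun x => (norm_lp_comp_embedding_le φ x).trans_eq (one_mul _).symm

theorem lpComap_apply (φ : κ ↪ ι) (x : lp E p) (k : κ) : lpComap (𝕜 := 𝕜) φ x k = x (φ k) := rfl

theorem norm_lpComap_le_one (φ : κ ↪ ι) :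
    ‖(lpComap φ : lp E p →L[𝕜] lp (fun k => E (φ k)) p)‖ ≤ 1 :=
  LinearMap.mkContinuous_norm_le _ zero_le_one _

variable [DecidableEq ι]

theorem lpComap_single_apply [DecidableEq κ] (φ : κ ↪ ι) (k : κ) (a : E (φ k)) :
    lpComap (𝕜 := 𝕜) φ (lp.single p (φ k) a) = lp.single p k a := by
  ext l
  rw [lpComap_apply]
  obtain rfl | hl := eq_or_ne l k
  · simp only [lp.single_apply_self]
  · rw [lp.single_apply_ne p _ _ (φ.injective.ne hl), lp.single_apply_ne p _ _ hl]

theorem lpComap_single_of_notMem_range {φ : κ ↪ ι} {i : ι} (hi : i ∉ Set.range φ) (a : E i) :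
    lpComap (𝕜 := 𝕜) φ (lp.single p i a) = 0 := by
  ext k
  exact lp.single_apply_ne p i a fun h => hi ⟨k, h⟩

end LpComap

section MultiIndex

variable {ι σ : Type*} [Fintype ι]

/-- The multi-index of the monomial `∏ i, x_{g i}`. -/
noncomputable def multiIndex (g : ι → σ) : σ →₀ ℕ := ∑ i, Finsupp.single (g i) 1

theorem mdeg_multiIndex (g : ι → ℕ) : mdeg (multiIndex g) = Fintype.card ι := by
  change (multiIndex g).degree = _
  simp [multiIndex]

theorem multiIndex_apply [DecidableEq σ] (g : ι → σ) (j : σ) :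
    multiIndex g j = (Finset.univ.filter fun i => g i = j).card := by
  simp [multiIndex, Finsupp.finsetSum_apply, Finsupp.single_apply]

theorem mem_support_multiIndex {g : ι → σ} {j : σ} :
    j ∈ (multiIndex g).support ↔ j ∈ Set.range g := by
  simp [multiIndex_apply, Finset.filter_eq_empty_iff]

theorem range_eq_of_multiIndex_eq {g h : ι → σ} (hgh : multiIndex g = multiIndex h) :
    Set.range g = Set.range h := by
  ext j
  rw [← mem_support_multiIndex, hgh, mem_support_multiIndex]

theorem multiIndex_comp_prodMk_injective {κ : Type*} (e : ι × κ ↪ σ) :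
    Function.Injective fun f : ι → κ => multiIndex fun i => e (i, f i) := by
  intro f g hfg
  ext i
  obtain ⟨k, hk⟩ : e (i, f i) ∈ Set.range fun k => e (k, g k) :=
    range_eq_of_multiIndex_eq hfg ▸ Set.mem_range_self i
  obtain ⟨rfl, hfg_eq⟩ := Prod.mk.inj (e.injective hk)
  exact hfg_eq.symm

theorem multiIndex_coe_eq_iff [DecidableEq σ] {α : σ →₀ ℕ} (h : ι → α.support) :
    multiIndex (fun i => (h i : σ)) = α ↔
      ∀ j, (Finset.univ.filter fun i => h i = j).card = α j := by
  rw [Finsupp.ext_iff]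
  refine ⟨fun hα j => ?_, fun hcard j => ?_⟩
  · simp only [← hα j, multiIndex_apply, Subtype.ext_iff]
  · by_cases hj : j ∈ α.support
    · simpa only [multiIndex_apply, Subtype.ext_iff] using hcard ⟨j, hj⟩
    · have h_ne (i : ι) : (h i : σ) ≠ j := fun hij => hj (hij ▸ (h i).2)
      simp [multiIndex_apply, h_ne, Finsupp.notMem_support_iff.1 hj]

end MultiIndex

section Coefficients

variable {𝕂 : Type*} [RCLike 𝕂] {p : ℝ≥0∞} [Fact (1 ≤ p)] {m : ℕ}

theorem coeffLp_multiIndex_eq_of_rearrangement_eq_zero (T : MultFormLp 𝕂 p m) (g : Fin m → ℕ)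
    (hT : ∀ h : Fin m → ℕ, multiIndex h = multiIndex g → h ≠ g →
      T (fun i => lp.single p (h i) 1) = 0) :
    coeffLp T (multiIndex g) = T fun i => lp.single p (g i) 1 := by
  let g' : Fin m → (multiIndex g).support :=
    fun i => ⟨g i, mem_support_multiIndex.2 (Set.mem_range_self i)⟩
  rw [coeffLp, Finset.sum_eq_single g' ?_ (by simp)]
  · exact if_pos ((multiIndex_coe_eq_iff g').1 rfl)
  · intro h _ hne
    have h_coe_ne : (fun i => (h i : ℕ)) ≠ g := fun heq =>
      hne (funext fun i => Subtype.ext (congrFun heq i))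
    exact ite_eq_right_iff.2 fun hcard => hT _ ((multiIndex_coe_eq_iff h).2 hcard) h_coe_ne

/-- The form whose `i`-th argument enters `T` only through its coordinates in the `i`-th block
`{e (i, k) | k}`; the blocks are disjoint as `e` is injective. -/
noncomputable def blockForm (e : Fin m × ℕ ↪ ℕ) (T : MultFormLp 𝕂 p m) : MultFormLp 𝕂 p m :=
  T.compContinuousLinearMap fun i => lpComap ((Function.Embedding.sectR i ℕ).trans e)

theorem norm_blockForm_le (e : Fin m × ℕ ↪ ℕ) (T : MultFormLp 𝕂 p m) : ‖blockForm e T‖ ≤ ‖T‖ :=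
  (ContinuousMultilinearMap.norm_compContinuousLinearMap_le _ _).trans <|
    mul_le_of_le_one_right (norm_nonneg T) <|
      Finset.prod_le_one (fun _ _ => norm_nonneg _) fun _ _ => norm_lpComap_le_one _

theorem blockForm_single (e : Fin m × ℕ ↪ ℕ) (T : MultFormLp 𝕂 p m) (f : Fin m → ℕ) :
    blockForm e T (fun i => lp.single p (e (i, f i)) 1) = T fun i => lp.single p (f i) 1 :=
  congrArg T <| funext fun i =>
    lpComap_single_apply (E := fun _ => 𝕂) ((Function.Embedding.sectR i ℕ).trans e) (f i) 1

theorem blockForm_single_eq_zero (e : Fin m × ℕ ↪ ℕ) (T : MultFormLp 𝕂 p m) {h : Fin m → ℕ}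
    {i : Fin m} (hi : h i ∉ Set.range fun k => e (i, k)) :
    blockForm e T (fun i => lp.single p (h i) 1) = 0 :=
  T.map_coord_zero i <|
    lpComap_single_of_notMem_range (E := fun _ => 𝕂)
      (φ := (Function.Embedding.sectR i ℕ).trans e) hi 1

theorem coeffLp_blockForm (e : Fin m × ℕ ↪ ℕ) (T : MultFormLp 𝕂 p m) (f : Fin m → ℕ) :
    coeffLp (blockForm e T) (multiIndex fun i => e (i, f i)) =
      T fun i => lp.single p (f i) 1 := by
  rw [← blockForm_single e T f]
  refine coeffLp_multiIndex_eq_of_rearrangement_eq_zero _ _ fun h hh hne => ?_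
  obtain ⟨i, hi⟩ := Function.ne_iff.1 hne
  obtain ⟨k, hk⟩ : h i ∈ Set.range fun k => e (k, f k) :=
    range_eq_of_multiIndex_eq hh ▸ Set.mem_range_self i
  refine blockForm_single_eq_zero e T (i := i) ?_
  rintro ⟨l, hl⟩
  obtain ⟨rfl, -⟩ := Prod.mk.inj (e.injective (hl.trans hk.symm))
  exact hi hk.symm

end Coefficients

theorem polyNorm_diagonal_le {ι 𝕂 E : Type*} [Fintype ι] [RCLike 𝕂] [NormedAddCommGroup E]
    [NormedSpace 𝕂 E] (T : ContinuousMultilinearMap 𝕂 (fun _ : ι => E) 𝕂) :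
    polyNorm (fun x => T fun _ => x) ≤ ‖T‖ := by
  refine csSup_le ((Metric.nonempty_closedBall.2 zero_le_one).image _) ?_
  rintro _ ⟨x, hx, rfl⟩
  have hx_norm : ‖x‖ ≤ 1 := mem_closedBall_zero_iff.1 hx
  exact T.unit_le_opNorm ((pi_norm_le_iff_of_nonneg zero_le_one).2 fun _ => hx_norm)

theorem multilinear_HL_le_polynomial_HL_general (𝕂 : Type*) [RCLike 𝕂] (m : ℕ)
    (p : ℝ≥0∞) [Fact (1 ≤ p)] (r s C : ℝ) (hC : 0 ≤ C)
    (hpoly : ∀ T : MultFormLp 𝕂 p m, ∀ A : Finset {α : ℕ →₀ ℕ // mdeg α = m},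
      (∑ α ∈ A, ‖coeffLp T α.1‖ ^ r) ^ s ≤ C * polyNorm (fun x => T (fun _ => x)))
    (T : MultFormLp 𝕂 p m) (A : Finset (Fin m → ℕ)) :
    (∑ f ∈ A, ‖T (fun i => lp.single p (f i) (1 : 𝕂))‖ ^ r) ^ s ≤ C * ‖T‖ := by
  let e : Fin m × ℕ ↪ ℕ := Encodable.encode' (Fin m × ℕ)
  let monomial : (Fin m → ℕ) ↪ {α : ℕ →₀ ℕ // mdeg α = m} :=
    { toFun := fun f => ⟨multiIndex fun i => e (i, f i), by rw [mdeg_multiIndex, Fintype.card_fin]⟩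
      inj' := fun _ _ h => multiIndex_comp_prodMk_injective e (congrArg Subtype.val h) }
  have coeff_monomial (f : Fin m → ℕ) :
      coeffLp (blockForm e T) (monomial f).1 = T fun i => lp.single p (f i) 1 :=
    coeffLp_blockForm e T f
  calc (∑ f ∈ A, ‖T (fun i => lp.single p (f i) (1 : 𝕂))‖ ^ r) ^ s
      = (∑ α ∈ A.map monomial, ‖coeffLp (blockForm e T) α.1‖ ^ r) ^ s := by
        simp only [Finset.sum_map, coeff_monomial]
    _ ≤ C * polyNorm (fun x => blockForm e T fun _ => x) := hpoly _ _
    _ ≤ C * ‖T‖ := by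
        gcongr
        exact (polyNorm_diagonal_le _).trans (norm_blockForm_le e T)

/-- If the `m`-homogeneous polynomial Hardy–Littlewood inequality on `ℓ_p` (with `p ≥ 2m` and
exponent `ρ = 2mp/(mp + p − 2m)`) holds with constant `C`, then the `m`-linear
Hardy–Littlewood inequality holds with the same constant `C`; that is, the multilinear
Hardy–Littlewood constant is at most the polynomial one. -/
theorem multilinear_HL_le_polynomial_HL (𝕂 : Type*) [RCLike 𝕂] (m : ℕ) (hm : 1 ≤ m)
    (p : ℝ) (hp : 2 * (m : ℝ) ≤ p) [Fact (1 ≤ ENNReal.ofReal p)]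
    (C : ℝ) (hC : 0 ≤ C)
    (hpoly : ∀ T : MultFormLp 𝕂 (ENNReal.ofReal p) m, ∀ A : Finset {α : ℕ →₀ ℕ // mdeg α = m},
      (∑ α ∈ A, ‖coeffLp T α.1‖ ^ (2 * (m : ℝ) * p / ((m : ℝ) * p + p - 2 * (m : ℝ))))
          ^ (((m : ℝ) * p + p - 2 * (m : ℝ)) / (2 * (m : ℝ) * p))
        ≤ C * polyNorm (fun x => T (fun _ => x))) :
    ∀ T : MultFormLp 𝕂 (ENNReal.ofReal p) m, ∀ A : Finset (Fin m → ℕ),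
      (∑ f ∈ A, ‖T (fun i => lp.single (ENNReal.ofReal p) (f i) (1 : 𝕂))‖
            ^ (2 * (m : ℝ) * p / ((m : ℝ) * p + p - 2 * (m : ℝ))))
          ^ (((m : ℝ) * p + p - 2 * (m : ℝ)) / (2 * (m : ℝ) * p))
        ≤ C * ‖T‖ :=
  multilinear_HL_le_polynomial_HL_general 𝕂 m (ENNReal.ofReal p) _ _ C hC hpoly
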